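/- Let p be a prime and let m, n be positive integers with m ≤ n and p^m ≠ 2. Let χ be a Dirichlet character of conductor p^n, and let N be the smallest positive integer satisfying m(N+1) - ⌊log_p N⌋ ≥ n. Then there exists a polynomial f with integer coefficients, with zero constant term and degree at most N, such that for every integer x, χ(1 + p^m x) = e(f(x)/p^{n-m}). -/

import Mathlib

/-- `e(θ) = exp(2πiθ)`. -/
noncomputable def e (θ : ℝ) : ℂ := Complex.exp (2 * Real.pi * Complex.I * θ)

lemma pk_val (p : ℕ) (hp : p.Prime) (k : ℕ) (hk : 0 < k) :
    ∃ v u : ℕ, k = p ^ v * u ∧ IsCoprime (p : ℤ) (u : ℤ) ∧ p ^ v ≤ k := by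
  obtain ⟨v, u, hu, h⟩ := Nat.exists_eq_pow_mul_and_not_dvd hk.ne' p hp.ne_one
  refine ⟨v, u, h, ?_, Nat.le_of_dvd hk ⟨u, h⟩⟩
  exact Nat.isCoprime_iff_coprime.2 ((Nat.Prime.coprime_iff_not_dvd hp).2 hu)

lemma pk_coeff (p : ℕ) (hp : p.Prime) (m r : ℕ) (hm : 0 < m) (k v u : ℕ) (hk : 0 < k)
    (h : k = p ^ v * u) (hu : IsCoprime (p : ℤ) (u : ℤ)) (hv : p ^ v ≤ k) :
    ∃ c : ℤ, (p : ℤ) ^ (r + m) * c = ((p ^ r).choose k : ℤ) * (p : ℤ) ^ (m * k) ∧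
      (p : ℤ) ^ (m * k) ∣ (p : ℤ) ^ (m + v) * c ∧ (k = 1 → c = 1) := by
  have hp0 : (p : ℤ) ≠ 0 := by exact_mod_cast hp.ne_zero
  have hvk : v + 1 ≤ k := lt_of_lt_of_le (Nat.lt_pow_self hp.one_lt) hv
  have hmk : v + m ≤ m * k := by
    obtain ⟨j, rfl⟩ : ∃ j, k = j + 1 := ⟨k - 1, by omega⟩
    nlinarith
  obtain ⟨C', hC'⟩ : ∃ C' : ℤ, (p : ℤ) ^ v * u * ((p ^ r).choose k : ℤ) = (p : ℤ) ^ r * C' := by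
    obtain ⟨j, rfl⟩ : ∃ j, k = j + 1 := ⟨k - 1, by omega⟩
    obtain ⟨s, hs⟩ : ∃ s, p ^ r = s + 1 := ⟨p ^ r - 1, by have := pow_pos hp.pos r; omega⟩
    refine ⟨(s.choose j : ℤ), ?_⟩
    have h2 := Nat.add_one_mul_choose_eq s j
    have h3 : ((p : ℤ) ^ v * u) = ((j + 1 : ℕ) : ℤ) := by rw [h]; push_cast; ring
    have h4 : (p : ℤ) ^ r = ((s + 1 : ℕ) : ℤ) := by rw [← hs]; push_cast; ring
    rw [h3, h4, hs]
    rw [mul_comm]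
    exact_mod_cast h2.symm
  have hd : (p : ℤ) ^ r ∣ (p : ℤ) ^ v * ((p ^ r).choose k : ℤ) := by
    have : IsCoprime ((p : ℤ) ^ r) (u : ℤ) := hu.pow_left
    apply this.dvd_of_dvd_mul_left
    exact ⟨C', by rw [← hC']; ring⟩
  obtain ⟨D, hD⟩ := hd
  obtain ⟨c, hc⟩ : (p : ℤ) ^ (r + m) ∣ ((p ^ r).choose k : ℤ) * (p : ℤ) ^ (m * k) := by
    obtain ⟨w, hw⟩ := Nat.exists_eq_add_of_le hmk
    refine ⟨D * p ^ w, ?_⟩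
    rw [hw]
    linear_combination (p : ℤ) ^ (m + w) * hD
  refine ⟨c, hc.symm, ⟨D, ?_⟩, ?_⟩
  · have : (p : ℤ) ^ r ≠ 0 := pow_ne_zero _ hp0
    apply mul_left_cancel₀ this
    linear_combination (-(p : ℤ) ^ v) * hc + (p : ℤ) ^ (m * k) * hD
  · rintro rfl
    have : (p : ℤ) ^ (r + m) ≠ 0 := pow_ne_zero _ hp0
    apply mul_left_cancel₀ this
    rw [← hc]; push_cast; simp [pow_add]

lemma pk_dvd (p : ℕ) (hp : p.Prime) (m v K n : ℕ) (c : ℤ)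
    (h : (p : ℤ) ^ K ∣ (p : ℤ) ^ (m + v) * c) (hK : n + v ≤ K) (hmn : m ≤ n) :
    (p : ℤ) ^ (n - m) ∣ c := by
  have hp0 : (p : ℤ) ≠ 0 := by exact_mod_cast hp.ne_zero
  have h2 := (pow_dvd_pow (p : ℤ) hK).trans h
  have h3 : n + v = (m + v) + (n - m) := by omega
  rw [h3, pow_add] at h2
  exact (mul_dvd_mul_iff_left (pow_ne_zero _ hp0)).1 h2

lemma pk_log_mono (p : ℕ) (hp : p.Prime) (m n N : ℕ) (hm : 0 < m)
    (h : n + Nat.log p N ≤ m * (N + 1)) (j : ℕ) (hj : N ≤ j) :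
    n + Nat.log p j ≤ m * (j + 1) := by
  induction j, hj using Nat.le_induction with
  | base => exact h
  | succ j hj ih =>
    have : Nat.log p (j + 1) ≤ Nat.log p j + 1 := by
      by_contra! hc
      have h1 : p ^ (Nat.log p j + 2) ≤ j + 1 := Nat.pow_le_of_le_log (by omega) (by omega)
      have h2 : j < p ^ (Nat.log p j + 1) := Nat.lt_pow_succ_log_self hp.one_lt j
      have h3 : p ^ (Nat.log p j + 1) < p ^ (Nat.log p j + 2) :=
        Nat.pow_lt_pow_right hp.one_lt (by omega)
      omega
    nlinarith

lemma pk_bound (p : ℕ) (hp : p.Prime) (m n N : ℕ) (hm : 0 < m) (hN : 0 < N)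
    (h : n + Nat.log p N ≤ m * (N + 1)) (k v : ℕ) (hk : N + 1 ≤ k) (hv : p ^ v ≤ k) :
    n + v ≤ m * k ∨ (k = N + 1 ∧ k = p ^ v ∧ n + v ≤ m * k + 1) := by
  have hp2 := hp.two_le
  rcases hv.lt_or_eq with hlt | heq
  · left
    have h1 := pk_log_mono p hp m n N hm h (k - 1) (by omega)
    have h2 : v ≤ Nat.log p (k - 1) := Nat.le_log_of_pow_le hp.one_lt (by omega)
    rw [Nat.sub_add_cancel (by omega)] at h1
    omega
  · obtain ⟨w, rfl⟩ : ∃ w, v = w + 1 := ⟨v - 1, by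
      rcases v with _ | v
      · simp at heq; omega
      · omega⟩
    rw [pow_succ] at heq
    have hw : 0 < p ^ w := pow_pos hp.pos _
    rcases Nat.lt_or_ge (N + 1) k with h5 | h5
    · left
      have h1 := pk_log_mono p hp m n N hm h (k - 2) (by omega)
      have h3 : p ^ w ≤ k - 2 := by
        rcases Nat.lt_or_ge (p ^ w) 2 with h6 | h6
        · omega
        · have : p ^ w * 2 ≤ p ^ w * p := Nat.mul_le_mul_left _ hp2
          omega
      have h2 : w ≤ Nat.log p (k - 2) := Nat.le_log_of_pow_le hp.one_lt h3
      obtain ⟨j, rfl⟩ : ∃ j, k = j + 2 := ⟨k - 2, by omega⟩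
      simp only [Nat.add_sub_cancel] at *
      nlinarith
    · right
      have hkN : k = N + 1 := by omega
      refine ⟨hkN, by rw [pow_succ]; exact heq.symm, ?_⟩
      have h2 : w ≤ Nat.log p N := by
        apply Nat.le_log_of_pow_le hp.one_lt
        have : p ^ w * 2 ≤ p ^ w * p := Nat.mul_le_mul_left _ hp2
        omega
      rw [hkN]; omega

lemma pk_two (p : ℕ) (hp : p.Prime) (m : ℕ) (hm : 0 < m) (hpm : p ^ m ≠ 2) (k v : ℕ)
    (hk : 2 ≤ k) (hv : p ^ v ≤ k) : (m + 1) + v ≤ m * k := by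
  have hp2 := hp.two_le
  have hvk : v + 1 ≤ k := lt_of_lt_of_le (Nat.lt_pow_self hp.one_lt) hv
  obtain ⟨j, rfl⟩ : ∃ j, k = j + 2 := ⟨k - 2, by omega⟩
  rcases Nat.lt_or_ge v (j + 1) with h | h
  · nlinarith
  · have hvj : v = j + 1 := by omega
    subst hvj
    have h1 : 2 ^ (j + 1) ≤ p ^ (j + 1) := Nat.pow_le_pow_left hp2 _
    have h2 : j < 2 ^ j := Nat.lt_pow_self (by norm_num)
    rw [pow_succ] at h1
    have hj : j = 0 := by omega
    subst hj
    have hp' : p = 2 := by simp at hv; omega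
    subst hp'
    have : m ≠ 1 := by rintro rfl; simp at hpm
    omega

/-- The coefficients of `((1 + p^m X)^(p^r) - 1) / p^(r+m)`. -/
lemma pk_main (p : ℕ) (hp : p.Prime) (m n : ℕ) (hm : 0 < m) (hmn : m ≤ n)
    (hpm : p ^ m ≠ 2) (N : ℕ) (hN : 0 < N) (h : n + Nat.log p N ≤ m * (N + 1)) :
    ∃ F : ℤ → ℤ, (∀ x, (1 + (p : ℤ) ^ m * x) ^ p ^ n = 1 + (p : ℤ) ^ (n + m) * F x) ∧
      (∀ x y, ∃ z, F x - F y = (x - y) * (1 + p * z)) ∧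
      ∃ f : Polynomial ℤ, f.coeff 0 = 0 ∧ f.natDegree ≤ N ∧
        ∀ x, (p : ℤ) ^ (n - m) ∣ F x - f.eval x := by
  have hex : ∀ k : ℕ, ∃ c : ℤ, (k = 0 → c = 0) ∧ (k = 1 → c = 1) ∧ (2 ≤ k → (p : ℤ) ∣ c) ∧
      (0 < k → (p : ℤ) ^ (n + m) * c = ((p ^ n).choose k : ℤ) * (p : ℤ) ^ (m * k)) ∧
      (N + 2 ≤ k → (p : ℤ) ^ (n - m) ∣ c) ∧
      (k = N + 1 → ∀ x : ℤ, (p : ℤ) ^ (n - m) ∣ c * x ^ k - c * x) := by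
    intro k
    rcases Nat.eq_zero_or_pos k with rfl | hk
    · exact ⟨0, by simp⟩
    obtain ⟨v, u, hkv, hu, hv⟩ := pk_val p hp k hk
    obtain ⟨c, hc1, hc2, hc3⟩ := pk_coeff p hp m n hm k v u hk hkv hu hv
    refine ⟨c, by omega, hc3, ?_, fun _ => hc1, ?_, ?_⟩
    · intro hk2
      have := pk_dvd p hp m v (m * k) (m + 1) c hc2 (pk_two p hp m hm hpm k v hk2 hv) (by omega)
      simpa using this
    · intro hk2
      rcases pk_bound p hp m n N hm hN h k v (by omega) hv with h1 | h1
      · exact pk_dvd p hp m v (m * k) n c hc2 h1 hmn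
      · omega
    · intro hk2 x
      rcases pk_bound p hp m n N hm hN h k v (by omega) hv with h1 | ⟨h1, h2, h3⟩
      · have := pk_dvd p hp m v (m * k) n c hc2 h1 hmn
        exact dvd_sub (this.mul_right _) (this.mul_right _)
      · have h4 : (p : ℤ) ^ (n + 1 - (m + 1)) ∣ p * c := by
          refine pk_dvd p hp (m + 1) v (m * k + 2) (n + 1) (p * c) ?_ (by omega) (by omega)
          have := mul_dvd_mul_left ((p : ℤ) ^ 2) hc2
          exact (dvd_of_eq (by ring)).trans (this.trans (dvd_of_eq (by ring)))
        have h5 : (p : ℤ) ∣ x ^ k - x := by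
          have := Fact.mk hp
          rw [← ZMod.intCast_zmod_eq_zero_iff_dvd, h2]
          push_cast
          rw [ZMod.pow_card_pow, sub_self]
        obtain ⟨w, hw⟩ := h5
        rw [Nat.add_sub_add_right] at h4
        rw [← mul_sub, hw, ← mul_assoc, mul_comm c]
        exact h4.mul_right _
  choose c h0 h1 h2 hc hbig hN1 using hex
  let M := N + 2 + p ^ n
  have hM : ∀ x : ℤ, ∑ k ∈ Finset.range M, c k * x ^ k
      = ∑ k ∈ Finset.range (N + 1), c k * x ^ k + c (N + 1) * x ^ (N + 1)
        + ∑ k ∈ Finset.range (p ^ n), c (N + 2 + k) * x ^ (N + 2 + k) := by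
    intro x
    rw [Finset.sum_range_add, Finset.sum_range_succ]
  refine ⟨fun x => ∑ k ∈ Finset.range M, c k * x ^ k, ?_, ?_, ?_⟩
  · intro x
    have hb : (1 + (p : ℤ) ^ m * x) ^ p ^ n
        = ∑ k ∈ Finset.range M, ((p : ℤ) ^ m * x) ^ k * ((p ^ n).choose k : ℤ) := by
      rw [add_comm, add_pow]
      simp only [one_pow, mul_one]
      apply Finset.sum_subset
      · intro k hk; simp [M] at *; omega
      · intro k _ hk
        simp at hk
        rw [Nat.choose_eq_zero_of_lt (by omega)]; simp
    have hM1 : M = (N + 1 + p ^ n) + 1 := by simp [M]; ring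
    show _ = 1 + (p : ℤ) ^ (n + m) * ∑ k ∈ Finset.range M, c k * x ^ k
    rw [hb, hM1, Finset.sum_range_succ', Finset.sum_range_succ', h0 0 rfl, mul_add,
      Finset.mul_sum]
    rw [add_comm]
    simp only [pow_zero, Nat.choose_zero_right, Nat.cast_one, mul_one, mul_zero, add_zero]
    congr 1
    apply Finset.sum_congr rfl
    intro k _
    rw [← mul_assoc, hc (k + 1) (by omega), mul_pow, ← pow_mul]; ring
  · intro x y
    have hk : ∀ k : ℕ, ∃ z, c k * x ^ k - c k * y ^ k = (x - y) * ((if k = 1 then 1 else 0) + p * z) := by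
      intro k
      rcases Nat.lt_or_ge k 2 with hk | hk
      · refine ⟨0, ?_⟩
        interval_cases k
        · simp
        · simp [h1 1 rfl]
      · obtain ⟨d, hd⟩ := h2 k hk
        obtain ⟨w, hw⟩ := sub_dvd_pow_sub_pow x y k
        refine ⟨d * w, ?_⟩
        rw [if_neg (by omega), ← mul_sub, hw, hd]; ring
    choose z hz using hk
    refine ⟨∑ k ∈ Finset.range M, z k, ?_⟩
    rw [← Finset.sum_sub_distrib, Finset.sum_congr rfl (fun k _ => hz k), ← Finset.mul_sum,
      Finset.sum_add_distrib, ← Finset.mul_sum, Finset.sum_ite_eq' , if_pos (by simp [M]; omega)]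
  · refine ⟨∑ k ∈ Finset.range (N + 1), Polynomial.C (c k) * Polynomial.X ^ k
      + Polynomial.C (c (N + 1)) * Polynomial.X, ?_, ?_, ?_⟩
    · simp [Polynomial.coeff_zero_eq_eval_zero, Polynomial.eval_finsetSum, Finset.sum_range_succ', h0 0 rfl]
    · refine (Polynomial.natDegree_add_le _ _).trans (max_le ?_ ?_)
      · apply Polynomial.natDegree_sum_le_of_forall_le
        intro k hk
        refine (Polynomial.natDegree_C_mul_X_pow_le _ _).trans ?_
        simp at hk; omega
      · have := Polynomial.natDegree_C_mul_X_pow_le (c (N + 1)) 1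
        rw [pow_one] at this
        omega
    · intro x
      simp only [hM, Polynomial.eval_add, Polynomial.eval_finsetSum, Polynomial.eval_mul,
        Polynomial.eval_C, Polynomial.eval_pow, Polynomial.eval_X]
      have e1 := hN1 (N + 1) rfl x
      have e2 : (p : ℤ) ^ (n - m) ∣
          ∑ k ∈ Finset.range (p ^ n), c (N + 2 + k) * x ^ (N + 2 + k) :=
        Finset.dvd_sum fun k _ => (hbig _ (by omega)).mul_right _
      exact (dvd_add e1 e2).trans (dvd_of_eq (by ring))

lemma e_add (a b : ℝ) : e (a + b) = e a * e b := by
  unfold e; rw [← Complex.exp_add]; congr 1; push_cast; ring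

lemma e_int (a : ℤ) : e a = 1 := by
  unfold e
  rw [Complex.exp_eq_one_iff]
  exact ⟨a, by push_cast; ring⟩

lemma e_nat_mul (s : ℕ) (b : ℝ) : e (s * b) = e b ^ s := by
  unfold e; rw [← Complex.exp_nat_mul]; congr 1; push_cast; ring

/-- Proposition A.4 (Postnikov character formula): if `p` is prime, `1 ≤ m ≤ n`,
`p^m ≠ 2`, `χ` is a Dirichlet character of conductor `p^n`, and `N` is the smallest
positive integer with `m(N+1) - ⌊log_p N⌋ ≥ n`, then there is `f ∈ ℤ[x]` with zero
constant term and degree at most `N` such that `χ(1 + p^m x) = e(f(x)/p^{n-m})` for all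
integers `x`. -/
theorem postnikov_formula (p : ℕ) (hp : p.Prime) (m n : ℕ) (hm : 0 < m) (hmn : m ≤ n)
    (hpm : p ^ m ≠ 2) (χ : DirichletCharacter ℂ (p ^ n)) (hχ : χ.IsPrimitive)
    (N : ℕ) (hN : 0 < N) (hN1 : (n : ℤ) ≤ (m : ℤ) * (N + 1) - (Nat.log p N : ℤ))
    (hNmin : ∀ N' : ℕ, 0 < N' → (n : ℤ) ≤ (m : ℤ) * (N' + 1) - (Nat.log p N' : ℤ) → N ≤ N') :
    ∃ f : Polynomial ℤ, f.coeff 0 = 0 ∧ f.natDegree ≤ N ∧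
      ∀ x : ℤ, χ (((1 + p ^ m * x : ℤ) : ZMod (p ^ n))) =
        e (((f.eval x : ℤ) : ℝ) / (p : ℝ) ^ (n - m)) := by
  have hlog : n + Nat.log p N ≤ m * (N + 1) := by
    zify; linarith
  obtain ⟨F, hF, hinj, f, hf0, hfd, hf⟩ := pk_main p hp m n hm hmn hpm N hN hlog
  have hp0 : (p : ℤ) ≠ 0 := by exact_mod_cast hp.ne_zero
  set q : ℤ := (p : ℤ) ^ (n - m) with hq
  -- additivity
  have hadd : ∀ x y, q ∣ F (x + y + p ^ m * x * y) - (F x + F y) := by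
    intro x y
    have e1 := hF (x + y + p ^ m * x * y)
    have e2 : (1 + (p : ℤ) ^ m * (x + y + p ^ m * x * y))
        = (1 + (p : ℤ) ^ m * x) * (1 + (p : ℤ) ^ m * y) := by ring
    rw [e2, mul_pow, hF, hF] at e1
    have e3 : F (x + y + p ^ m * x * y) - (F x + F y) = (p : ℤ) ^ (n + m) * (F x * F y) := by
      apply mul_left_cancel₀ (pow_ne_zero (n + m) hp0)
      linear_combination -e1
    rw [e3]
    exact (pow_dvd_pow _ (by omega)).mul_right _
  have hFinj : ∀ x y, q ∣ F x - F y → q ∣ x - y := by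
    intro x y hxy
    obtain ⟨z, hz⟩ := hinj x y
    rw [hz] at hxy
    refine IsCoprime.dvd_of_dvd_mul_right ?_ hxy
    apply IsCoprime.pow_left
    exact ⟨-z, 1, by ring⟩
  have hFcongr : ∀ x y, q ∣ x - y → q ∣ F x - F y := by
    intro x y hxy
    obtain ⟨z, hz⟩ := hinj x y
    rw [hz]; exact hxy.mul_right _
  have hF0 : F 0 = 0 := by
    have := hF 0
    simpa [hp.ne_zero] using this
  have hχcongr : ∀ x y : ℤ, q ∣ x - y →
      (((1 + p ^ m * x : ℤ) : ZMod (p ^ n))) = (((1 + p ^ m * y : ℤ) : ZMod (p ^ n))) := by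
    intro x y hxy
    rw [← sub_eq_zero, ← Int.cast_sub, ZMod.intCast_zmod_eq_zero_iff_dvd]
    have : ((p ^ n : ℕ) : ℤ) = p ^ m * q := by
      rw [hq, ← pow_add]; push_cast; congr 1; omega
    rw [this]
    have e1 : (1 + (p : ℤ) ^ m * x) - (1 + p ^ m * y) = p ^ m * (x - y) := by ring
    rw [e1]
    exact mul_dvd_mul_left _ hxy
  -- find y with F y = 1 mod q
  have hqpos : 0 < p ^ (n - m) := pow_pos hp.pos _
  have hqn : q = ((p ^ (n - m) : ℕ) : ℤ) := by rw [hq]; push_cast; rfl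
  obtain ⟨y, hy⟩ : ∃ y, q ∣ F y - 1 := by
    have : NeZero (p ^ (n - m)) := ⟨hqpos.ne'⟩
    let G : ZMod (p ^ (n - m)) → ZMod (p ^ (n - m)) := fun a => ((F (a.val : ℤ) : ℤ) : ZMod _)
    have hG : Function.Injective G := by
      intro a b hab
      have h1 : q ∣ F (a.val : ℤ) - F (b.val : ℤ) := by
        rw [hqn, ← ZMod.intCast_zmod_eq_zero_iff_dvd, Int.cast_sub, sub_eq_zero]; exact hab
      have h2 := hFinj _ _ h1
      rw [hqn, ← ZMod.intCast_zmod_eq_zero_iff_dvd, Int.cast_sub, sub_eq_zero] at h2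
      simpa using h2
    obtain ⟨a, ha⟩ := (Finite.injective_iff_surjective.1 hG) 1
    refine ⟨(a.val : ℤ), ?_⟩
    rw [hqn, ← ZMod.intCast_zmod_eq_zero_iff_dvd, Int.cast_sub, sub_eq_zero, Int.cast_one]
    exact ha
  have hpow : ∀ s : ℕ, ∃ z : ℤ, (1 + (p : ℤ) ^ m * y) ^ s = 1 + p ^ m * z ∧ q ∣ F z - s := by
    intro s
    induction s with
    | zero => exact ⟨0, by simp, by simp [hF0]⟩
    | succ s ih =>
      obtain ⟨z, hz, hz2⟩ := ih
      refine ⟨z + y + p ^ m * z * y, by rw [pow_succ, hz]; ring, ?_⟩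
      have := dvd_add (dvd_add (hadd z y) hz2) hy
      exact this.trans (dvd_of_eq (by push_cast; ring))
  have hchi : ∀ (x : ℤ) (s : ℕ), q ∣ F x - s →
      χ (((1 + p ^ m * x : ℤ) : ZMod (p ^ n))) =
        χ (((1 + p ^ m * y : ℤ) : ZMod (p ^ n))) ^ s := by
    intro x s hxs
    obtain ⟨z, hz, hz2⟩ := hpow s
    have h1 : q ∣ F x - F z := by
      have := dvd_sub hxs hz2
      exact this.trans (dvd_of_eq (by ring))
    rw [hχcongr x z (hFinj _ _ h1), ← hz, Int.cast_pow, map_pow]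
  have hone : χ (((1 + p ^ m * y : ℤ) : ZMod (p ^ n))) ^ (p ^ (n - m)) = 1 := by
    rw [← hchi 0 (p ^ (n - m)) (by rw [hF0, hqn]; simp)]
    simp
  obtain ⟨b, hb⟩ : ∃ b : ℕ, χ (((1 + p ^ m * y : ℤ) : ZMod (p ^ n)))
      = e ((b : ℝ) / (p : ℝ) ^ (n - m)) := by
    have : NeZero (p ^ (n - m)) := ⟨hqpos.ne'⟩
    obtain ⟨i, _, hi⟩ := (Complex.isPrimitiveRoot_exp _ hqpos.ne').eq_pow_of_pow_eq_one hone
    refine ⟨i, ?_⟩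
    rw [← hi, ← Complex.exp_nat_mul, e]
    congr 1
    push_cast; ring
  have hqR : (p : ℝ) ^ (n - m) ≠ 0 := pow_ne_zero _ (by exact_mod_cast hp.ne_zero)
  refine ⟨Polynomial.C (b : ℤ) * f, by simp [hf0], (Polynomial.natDegree_C_mul_le _ _).trans hfd, ?_⟩
  intro x
  obtain ⟨s, hs⟩ : ∃ s : ℕ, q ∣ F x - s := by
    have hq0 : q ≠ 0 := pow_ne_zero _ hp0
    refine ⟨(F x % q).toNat, ?_⟩
    rw [Int.toNat_of_nonneg (Int.emod_nonneg _ hq0)]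
    exact Int.dvd_self_sub_emod
  rw [hchi x s hs, hb, ← e_nat_mul]
  obtain ⟨t, ht⟩ : q ∣ f.eval x - s := by
    have := dvd_sub hs (hf x)
    exact this.trans (dvd_of_eq (by ring))
  have ht' : ((f.eval x : ℤ) : ℝ) = s + (p : ℝ) ^ (n - m) * t := by
    have : f.eval x = s + q * t := by linarith
    rw [this, hq]; push_cast; ring
  have : (((Polynomial.C (b : ℤ) * f).eval x : ℤ) : ℝ) / (p : ℝ) ^ (n - m)
      = s * ((b : ℝ) / (p : ℝ) ^ (n - m)) + ((b * t : ℤ) : ℝ) := by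
    simp only [Polynomial.eval_mul, Polynomial.eval_C]
    push_cast
    rw [ht']
    field_simp
  rw [this, e_add, e_int, mul_one]
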